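/- Let G be a non-trivial connected finite simple graph and let B1, B2, B3 be three distinct blocks of G such that V(B1) ∩ V(B2) ∩ V(B3) = {w}. Let G' be the graph obtained from G by adding an edge between a neighbour v1 of w in B1 and a neighbour v2 of w in B2. Then c(G) = c(G'), i.e., G and G' have the same number of cut vertices. -/

import Mathlib

/-!
Deleting a vertex from a finite connected graph increases the number of components exactly when
the remaining graph is not preconnected (`isCutVertex_iff`), so cut vertices can be discussed
through walks confined to a set of vertices (`ReachIn`).

The graphs `G` and `G' = G + v1v2` in fact have the same cut vertices. Adding an edge cannot create
one. Conversely let `G' - u` be preconnected. If `u ∈ {v1, v2}` then `G' - u = G - u`, and if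
`u ∉ {w, v1, v2}` the new edge can be bypassed through `w`. The case `u = w` does not occur: two
distinct blocks through `w` are separated by `w` (`IsBlock.not_reachIn`), since a path between them
avoiding `w` could be added to their union to give a larger connected vertex set without cut
vertices. Hence the component of `G - w` meeting `B3` contains neither `v1` nor `v2`, and is still
a component of `G' - w`.
-/

/-- A vertex `v` of a graph `G` is a cut vertex if deleting it increases the number of
connected components. -/
def IsCutVertex {V : Type*} (G : SimpleGraph V) (v : V) : Prop :=
  Nat.card G.ConnectedComponent < Nat.card ((G.induce {u | u ≠ v}).ConnectedComponent)

/-- The number of cut vertices of `G`. -/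
noncomputable def numCutVertices {V : Type*} (G : SimpleGraph V) : ℕ :=
  Nat.card {v : V | IsCutVertex G v}

/-- A block of `G` is a maximal connected induced subgraph having no cut vertex of its own,
identified with its vertex set. -/
def IsBlock {V : Type*} (G : SimpleGraph V) (B : Set V) : Prop :=
  (G.induce B).Connected ∧ (∀ v, ¬ IsCutVertex (G.induce B) v) ∧
    ∀ B' : Set V, B ⊆ B' → (G.induce B').Connected →
      (∀ v, ¬ IsCutVertex (G.induce B') v) → B' = B

open SimpleGraph

/-- `a` and `b` are joined by a walk of `G` all of whose vertices lie in `S`; in particular both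
endpoints belong to `S`. -/
def ReachIn {V : Type*} (G : SimpleGraph V) (S : Set V) (a b : V) : Prop :=
  ∃ p : G.Walk a b, ∀ x ∈ p.support, x ∈ S

/-- A walk of an induced subgraph is a walk of the ambient graph through the same vertices. -/
theorem exists_walk_of_induce {V : Type*} {G : SimpleGraph V} {S : Set V} {a b : S}
    (p : (G.induce S).Walk a b) :
    ∃ q : G.Walk a.1 b.1, ∀ x ∈ q.support, ∃ y ∈ p.support, y.1 = x := by
  induction p with
  | nil => exact ⟨Walk.nil, by simp⟩
  | @cons u v c h p ih =>
    obtain ⟨q, hq⟩ := ih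
    refine ⟨Walk.cons (induce_adj.1 h) q, fun x hx => ?_⟩
    rw [Walk.support_cons, List.mem_cons] at hx
    rcases hx with rfl | hx
    · exact ⟨u, by simp, rfl⟩
    · obtain ⟨y, hy, rfl⟩ := hq x hx
      exact ⟨y, by simp [hy], rfl⟩

namespace ReachIn

variable {V : Type*} {G H : SimpleGraph V} {S T : Set V} {a b c : V}

theorem trans (h : ReachIn G S a b) (h' : ReachIn G S b c) : ReachIn G S a c := by
  obtain ⟨p, hp⟩ := h
  obtain ⟨q, hq⟩ := h'
  refine ⟨p.append q, fun x hx => ?_⟩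
  rw [Walk.mem_support_append_iff] at hx
  exact hx.elim (hp x) (hq x)

theorem symm (h : ReachIn G S a b) : ReachIn G S b a := by
  obtain ⟨p, hp⟩ := h
  exact ⟨p.reverse, fun x hx => hp x (by simpa using hx)⟩

theorem mono (hST : S ⊆ T) (h : ReachIn G S a b) : ReachIn G T a b := by
  obtain ⟨p, hp⟩ := h
  exact ⟨p, fun x hx => hST (hp x hx)⟩

theorem mono_graph (hGH : G ≤ H) (h : ReachIn G S a b) : ReachIn H S a b := by
  obtain ⟨p, hp⟩ := h
  exact ⟨p.mapLe hGH, fun x hx => hp x (by simpa using hx)⟩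

theorem refl (ha : a ∈ S) : ReachIn G S a a := ⟨Walk.nil, by simpa using ha⟩

theorem of_adj (ha : a ∈ S) (hb : b ∈ S) (h : G.Adj a b) : ReachIn G S a b :=
  ⟨h.toWalk, by simp [ha, hb]⟩

theorem right_mem (h : ReachIn G S a b) : b ∈ S := by
  obtain ⟨p, hp⟩ := h
  exact hp _ p.end_mem_support

/-- If every edge of `H` inside `S` can be replaced by a walk of `G` inside `S`, then so can every
walk. -/
theorem of_forall_adj (hadj : ∀ x ∈ S, ∀ y ∈ S, H.Adj x y → ReachIn G S x y)
    (h : ReachIn H S a b) : ReachIn G S a b := by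
  obtain ⟨p, hp⟩ := h
  induction p with
  | nil => exact refl (hp _ (by simp))
  | cons hxy p ih =>
    refine (hadj _ (hp _ (by simp)) _ (hp _ (by simp)) hxy).trans (ih fun x hx => hp x ?_)
    simp [hx]

/-- A vertex set closed under `H`-adjacency within `S` is closed under `ReachIn H S`. -/
theorem mem_of_closed {A : Set V} (hA : ∀ x ∈ A, ∀ y ∈ S, H.Adj x y → y ∈ A)
    (h : ReachIn H S a b) (ha : a ∈ A) : b ∈ A := by
  obtain ⟨p, hp⟩ := h
  induction p with
  | nil => exact ha
  | cons hxy p ih =>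
    exact ih (hA _ ha _ (hp _ (by simp)) hxy) fun x hx => hp x (by simp [hx])

theorem reachable_induce (h : ReachIn G S a b) (ha : a ∈ S) (hb : b ∈ S) :
    (G.induce S).Reachable ⟨a, ha⟩ ⟨b, hb⟩ := by
  obtain ⟨p, hp⟩ := h
  exact ⟨p.induce S hp⟩

theorem of_reachable_induce {a b : S} (h : (G.induce S).Reachable a b) :
    ReachIn G S a b := by
  obtain ⟨p⟩ := h
  obtain ⟨q, hq⟩ := exists_walk_of_induce p
  refine ⟨q, fun x hx => ?_⟩
  obtain ⟨y, -, rfl⟩ := hq x hx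
  exact y.2

end ReachIn

theorem preconnected_induce_iff_reachIn {V : Type*} {G : SimpleGraph V} {S : Set V} :
    (G.induce S).Preconnected ↔ ∀ a ∈ S, ∀ b ∈ S, ReachIn G S a b :=
  ⟨fun h a ha b hb => ReachIn.of_reachable_induce (h ⟨a, ha⟩ ⟨b, hb⟩),
    fun h a b => (h a a.2 b b.2).reachable_induce a.2 b.2⟩

theorem isCutVertex_iff {V : Type*} [Finite V] {G : SimpleGraph V} (hG : G.Connected) (v : V) :
    IsCutVertex G v ↔ ¬ ∀ a ≠ v, ∀ b ≠ v, ReachIn G {u | u ≠ v} a b := by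
  have h1 : Nat.card G.ConnectedComponent = 1 := by
    rw [Nat.card_eq_one_iff_unique]
    exact ⟨hG.preconnected.subsingleton_connectedComponent,
      hG.nonempty.map G.connectedComponentMk⟩
  have h2 := preconnected_induce_iff_reachIn (G := G) (S := {u | u ≠ v})
  simp only [Set.mem_ofPred_eq] at h2
  rw [IsCutVertex, h1, ← h2, ← not_le, Finite.card_le_one_iff_subsingleton, not_iff_not]
  exact ⟨fun h a b => ConnectedComponent.exact (h.elim _ _),
    fun h => h.subsingleton_connectedComponent⟩

theorem isCutVertex_induce_iff {V : Type*} [Finite V] {G : SimpleGraph V} {B : Set V}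
    (hB : (G.induce B).Connected) (v : B) :
    IsCutVertex (G.induce B) v ↔ ¬ ∀ a ∈ B \ {v.1}, ∀ b ∈ B \ {v.1}, ReachIn G (B \ {v.1}) a b := by
  rw [isCutVertex_iff hB, not_iff_not]
  constructor
  · rintro h a ⟨ha, hav⟩ b ⟨hb, hbv⟩
    obtain ⟨p, hp⟩ := h ⟨a, ha⟩ (fun h => hav (congrArg Subtype.val h))
      ⟨b, hb⟩ (fun h => hbv (congrArg Subtype.val h))
    obtain ⟨q, hq⟩ := exists_walk_of_induce p
    refine ⟨q, fun x hx => ?_⟩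
    obtain ⟨y, hy, rfl⟩ := hq x hx
    exact ⟨y.2, fun h => hp y hy (Subtype.ext h)⟩
  · rintro h ⟨a, ha⟩ hav ⟨b, hb⟩ hbv
    obtain ⟨p, hp⟩ := h a ⟨ha, fun h => hav (Subtype.ext h)⟩ b ⟨hb, fun h => hbv (Subtype.ext h)⟩
    refine ⟨p.induce B fun x hx => (hp x hx).1, fun x hx => ?_⟩
    have hx' : x.1 ∈ p.support := by
      simpa using hx
    rintro rfl
    exact (hp _ hx').2 rfl

/-- On a path from `a` to `b`, every vertex `x ≠ u` still reaches an endpoint after `u` is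
removed. -/
theorem SimpleGraph.Walk.IsPath.reachIn_or {V : Type*} {G : SimpleGraph V} {a b x u : V}
    {p : G.Walk a b} (hp : p.IsPath) (hx : x ∈ p.support) (hxu : x ≠ u) :
    ReachIn G ({y | y ∈ p.support} \ {u}) x a ∨ ReachIn G ({y | y ∈ p.support} \ {u}) x b := by
  classical
  by_cases hu : u ∈ (p.takeUntil x hx).support
  · right
    refine ⟨p.dropUntil x hx, fun y hy => ⟨p.support_dropUntil_subset_support hx hy, ?_⟩⟩
    rintro rfl
    have hnd := hp.support_nodup
    rw [← p.take_spec hx, Walk.support_append] at hnd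
    rw [Walk.mem_support_iff] at hy
    exact (List.disjoint_of_nodup_append hnd) hu (hy.resolve_left hxu.symm)
  · left
    refine ReachIn.symm ⟨p.takeUntil x hx, fun y hy => ⟨p.support_takeUntil_subset_support hx hy, ?_⟩⟩
    rintro rfl
    exact hu hy

section Block

variable {V : Type*} {G : SimpleGraph V} {B C : Set V}

theorem IsBlock.reachIn (hB : IsBlock G B) {a b : V} (ha : a ∈ B) (hb : b ∈ B) :
    ReachIn G B a b :=
  preconnected_induce_iff_reachIn.1 hB.1.preconnected a ha b hb

theorem IsBlock.reachIn_diff [Finite V] (hB : IsBlock G B) (u : V) {a b : V} (ha : a ∈ B) (hb : b ∈ B)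
    (hau : a ≠ u) (hbu : b ≠ u) : ReachIn G (B \ {u}) a b := by
  by_cases hu : u ∈ B
  · have h := hB.2.1 ⟨u, hu⟩
    rw [isCutVertex_induce_iff hB.1, not_not] at h
    exact h a ⟨ha, hau⟩ b ⟨hb, hbu⟩
  · rw [Set.sdiff_singleton_eq_self hu]
    exact hB.reachIn ha hb

theorem IsBlock.exists_ne (hB : IsBlock G B) (hC : IsBlock G C) (hBC : B ≠ C) {w : V}
    (hwC : w ∈ C) : ∃ x ∈ B, x ≠ w := by
  by_contra! h
  have hsub : B ⊆ C := fun x hx => h x hx ▸ hwC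
  exact hBC (hB.2.2 C hsub hC.1 hC.2.1).symm

/-- Distinct blocks sharing `w` lie in different components of `G - w`. -/
theorem IsBlock.not_reachIn [Finite V] (hB : IsBlock G B) (hC : IsBlock G C) (hBC : B ≠ C) {w b c : V}
    (hwB : w ∈ B) (hwC : w ∈ C) (hb : b ∈ B) (hc : c ∈ C) (hbw : b ≠ w) (hcw : c ≠ w) :
    ¬ ReachIn G {u | u ≠ w} b c := by
  classical
  rintro ⟨q, hq⟩
  obtain ⟨p, hp, hpw⟩ : ∃ p : G.Walk b c, p.IsPath ∧ ∀ x ∈ p.support, x ≠ w :=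
    ⟨q.bypass, q.bypass_isPath, fun x hx => hq x (q.support_bypass_subset_support hx)⟩
  set P : Set V := {y | y ∈ p.support} with hP
  set D : Set V := B ∪ C ∪ P with hD
  have hBD : B ⊆ D := fun x hx => Or.inl (Or.inl hx)
  have hCD : C ⊆ D := fun x hx => Or.inl (Or.inr hx)
  have hPD : P ⊆ D := fun x hx => Or.inr hx
  -- Away from the removed vertex, everything in the union reaches `w`.
  have key : ∀ u, u ≠ w → ∀ x ∈ D, x ≠ u → ReachIn G (D \ {u}) x w := by
    intro u hu x hx hxu
    have hBu : ∀ y ∈ B, y ≠ u → ReachIn G (D \ {u}) y w := fun y hy hyu =>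
      (hB.reachIn_diff u hy hwB hyu hu.symm).mono (Set.sdiff_subset_sdiff_left hBD)
    have hCu : ∀ y ∈ C, y ≠ u → ReachIn G (D \ {u}) y w := fun y hy hyu =>
      (hC.reachIn_diff u hy hwC hyu hu.symm).mono (Set.sdiff_subset_sdiff_left hCD)
    rcases hx with (hx | hx) | hx
    · exact hBu x hx hxu
    · exact hCu x hx hxu
    · rcases hp.reachIn_or hx hxu with h | h
      · exact (h.mono (Set.sdiff_subset_sdiff_left hPD)).trans (hBu b hb h.right_mem.2)
      · exact (h.mono (Set.sdiff_subset_sdiff_left hPD)).trans (hCu c hc h.right_mem.2)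
  -- When `w` itself is removed, the path holds the two blocks together.
  have keyw : ∀ x ∈ D, x ≠ w → ReachIn G (D \ {w}) x b := by
    intro x hx hxw
    have hPw : ∀ y ∈ P, ReachIn G (D \ {w}) y b := fun y hy =>
      ReachIn.symm ⟨p.takeUntil y hy, fun z hz =>
        have hz' := p.support_takeUntil_subset_support hy hz
        ⟨hPD hz', hpw z hz'⟩⟩
    rcases hx with (hx | hx) | hx
    · exact (hB.reachIn_diff w hx hb hxw hbw).mono (Set.sdiff_subset_sdiff_left hBD)
    · exact ((hC.reachIn_diff w hx hc hxw hcw).mono (Set.sdiff_subset_sdiff_left hCD)).trans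
        (hPw c p.end_mem_support)
    · exact hPw x hx
  have hDc : (G.induce D).Connected := by
    refine (connected_iff _).2 ⟨preconnected_induce_iff_reachIn.2 ?_, ⟨⟨w, hBD hwB⟩⟩⟩
    have : ∀ x ∈ D, ReachIn G D x w := by
      intro x hx
      by_cases hxb : x = b
      · subst hxb
        exact (hB.reachIn hb hwB).mono hBD
      · exact (key b hbw x hx hxb).mono Set.sdiff_subset
    exact fun x hx y hy => (this x hx).trans (this y hy).symm
  have hDn : ∀ v, ¬ IsCutVertex (G.induce D) v := by
    rintro ⟨u, hu⟩
    rw [isCutVertex_induce_iff hDc, not_not]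
    rintro x ⟨hx, hxu⟩ y ⟨hy, hyu⟩
    by_cases huw : u = w
    · subst huw
      exact (keyw x hx hxu).trans (keyw y hy hyu).symm
    · exact (key u huw x hx hxu).trans (key u huw y hy hyu).symm
  exact hBC ((hB.2.2 D hBD hDc hDn).symm.trans (hC.2.2 D hCD hDc hDn))

end Block

/-- If three distinct blocks `B1, B2, B3` of a non-trivial connected graph `G` intersect
exactly in the vertex `w`, then adding an edge between a neighbour `v1` of `w` in `B1` and
a neighbour `v2` of `w` in `B2` does not change the number of cut vertices. -/
theorem stmt_1 {V : Type*} [Fintype V] (G : SimpleGraph V) (hG : G.Connected)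
    (hn : 2 ≤ Fintype.card V) (B1 B2 B3 : Set V)
    (hB1 : IsBlock G B1) (hB2 : IsBlock G B2) (hB3 : IsBlock G B3)
    (h12 : B1 ≠ B2) (h13 : B1 ≠ B3) (h23 : B2 ≠ B3)
    (w : V) (hw : B1 ∩ B2 ∩ B3 = {w})
    (v1 v2 : V) (hv1 : v1 ∈ B1) (hv2 : v2 ∈ B2)
    (ha1 : G.Adj w v1) (ha2 : G.Adj w v2) :
    numCutVertices G = numCutVertices (G ⊔ SimpleGraph.fromEdgeSet {s(v1, v2)}) := by
  set G' := G ⊔ SimpleGraph.fromEdgeSet {s(v1, v2)} with hG'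
  have hle : G ≤ G' := le_sup_left
  have hG'c : G'.Connected := hG.mono hle
  have hadj : ∀ x y, G'.Adj x y → G.Adj x y ∨ (x = v1 ∧ y = v2) ∨ (x = v2 ∧ y = v1) := by
    intro x y h
    rcases h with h | h
    · exact Or.inl h
    · rw [SimpleGraph.fromEdgeSet_adj, Set.mem_singleton_iff, Sym2.eq_iff] at h
      exact Or.inr h.1
  obtain ⟨⟨hw1, hw2⟩, hw3⟩ : w ∈ B1 ∩ B2 ∩ B3 := by
    rw [hw]
    exact Set.mem_singleton w
  have main : ∀ u, IsCutVertex G u ↔ IsCutVertex G' u := by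
    intro u
    rw [isCutVertex_iff hG, isCutVertex_iff hG'c, not_iff_not]
    refine ⟨fun h a ha b hb => (h a ha b hb).mono_graph hle, fun h => ?_⟩
    by_cases huw : u = w
    · subst huw
      exfalso
      obtain ⟨x, hx, hxw⟩ := hB3.exists_ne hB1 h13.symm hw1
      -- The component of `x` in `G - w` misses both ends of the new edge.
      have n1 := hB3.not_reachIn hB1 h13.symm hw3 hw1 hx hv1 hxw ha1.ne'
      have n2 := hB3.not_reachIn hB2 h23.symm hw3 hw2 hx hv2 hxw ha2.ne'
      refine n1 ((h x hxw v1 ha1.ne').mem_of_closed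
        (A := {y | ReachIn G {z | z ≠ u} x y}) ?_ (ReachIn.refl hxw))
      intro y hy z hz hyz
      rcases hadj y z hyz with h | ⟨rfl, -⟩ | ⟨rfl, -⟩
      · exact ReachIn.trans hy (ReachIn.of_adj hy.right_mem hz h)
      · exact absurd hy n1
      · exact absurd hy n2
    · intro a ha b hb
      refine (h a ha b hb).of_forall_adj fun x hx y hy hxy => ?_
      have hwu : w ∈ {z | z ≠ u} := Ne.symm huw
      rcases hadj x y hxy with h | ⟨rfl, rfl⟩ | ⟨rfl, rfl⟩
      · exact ReachIn.of_adj hx hy h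
      · exact (ReachIn.of_adj hx hwu ha1.symm).trans (ReachIn.of_adj hwu hy ha2)
      · exact (ReachIn.of_adj hx hwu ha2.symm).trans (ReachIn.of_adj hwu hy ha1)
  simp only [numCutVertices, main]
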